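/- Let N be a positive integer, 0 ≤ α < 1/4, and let F̃ be the NUDFT matrix associated with a set of α-perturbed nodes. Then F̃ is invertible and its spectral condition number satisfies κ₂(F̃) = ‖F̃‖₂ ‖F̃^{−1}‖₂ ≤ (1+φ_α)/(1−φ_α), where φ_α = 1 − cos(πα) + sin(πα); in particular the bound is independent of N. -/

import Mathlib

open Real Finset

/-!
Let `F` be the transform with equispaced nodes of spacing `h` and frequencies `ω k`, and put
`t k = h * ω k ∈ [-π, π]`. Moving node `j` by `-δ j * h`, with `|δ j| ≤ α`, multiplies the entries
of `F` by `exp (i δ j t k)`. Following Kadec, expand `cos (δ t) - 1` in the exponentials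
`exp (i n t)` and `i sin (δ t)` in the antiperiodic exponentials `exp (i (n - 1/2) t)`. Each term
of the two series is a product of a function of `j` and a function of `k`, so it acts on `F` as
`D * F * D'` with diagonal `D`, `D'`, and the perturbation has norm at most `‖F‖` times the sum of
the suprema of the coefficients over `|δ| ≤ α`. For `α ≤ 1/4` these suprema are attained at `δ = α`,
and since the coefficients alternate in sign, their sums are, up to sign, the values of the two
series at `t = π`, namely `1 - cos (π α)` and `sin (π α)`. Equispaced nodes make `F` a multiple of a
unitary matrix, so a Neumann series argument bounds the condition number of the perturbed one.
-/

open scoped Matrix Matrix.Norms.L2Operator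

section ConditionNumber

lemma norm_mul_norm_inv_le_of_norm_sub_mul_norm_inv_le {R : Type*} [NormedRing R] {u v : Rˣ}
    {φ : ℝ} (hφ : φ < 1) (h : ‖(v : R) - u‖ * ‖(↑u⁻¹ : R)‖ ≤ φ) :
    ‖(v : R)‖ * ‖(↑v⁻¹ : R)‖ ≤ (1 + φ) / (1 - φ) * (‖(u : R)‖ * ‖(↑u⁻¹ : R)‖) := by
  have hφ0 : 0 ≤ φ := (by positivity : 0 ≤ ‖(v : R) - u‖ * ‖(↑u⁻¹ : R)‖).trans h
  have hv : ‖(v : R)‖ ≤ (1 + φ) * ‖(u : R)‖ := by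
    have hsplit : (v : R) = u + (v - u) * ↑u⁻¹ * u := by simp
    calc ‖(v : R)‖ ≤ ‖(u : R)‖ + ‖(v - u : R) * ↑u⁻¹ * u‖ := by
          nth_rewrite 1 [hsplit]; exact norm_add_le _ _
      _ ≤ ‖(u : R)‖ + ‖(v - u : R)‖ * ‖(↑u⁻¹ : R)‖ * ‖(u : R)‖ := by
          gcongr; exact norm_mul₃_le
      _ ≤ (1 + φ) * ‖(u : R)‖ := by rw [one_add_mul]; gcongr
  have hv_inv : ‖(↑v⁻¹ : R)‖ ≤ ‖(↑u⁻¹ : R)‖ / (1 - φ) := by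
    have hsplit : (↑v⁻¹ : R) = ↑u⁻¹ - ↑v⁻¹ * (v - u) * ↑u⁻¹ := by simp [mul_sub, sub_mul]
    have hle : ‖(↑v⁻¹ : R)‖ ≤ ‖(↑u⁻¹ : R)‖ + ‖(↑v⁻¹ : R)‖ * φ :=
      calc ‖(↑v⁻¹ : R)‖ ≤ ‖(↑u⁻¹ : R)‖ + ‖(↑v⁻¹ : R) * (v - u) * ↑u⁻¹‖ := by
            nth_rewrite 1 [hsplit]; exact norm_sub_le _ _
        _ ≤ ‖(↑u⁻¹ : R)‖ + ‖(↑v⁻¹ : R)‖ * (‖(v - u : R)‖ * ‖(↑u⁻¹ : R)‖) := by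
            rw [← mul_assoc]; gcongr; exact norm_mul₃_le
        _ ≤ ‖(↑u⁻¹ : R)‖ + ‖(↑v⁻¹ : R)‖ * φ := by gcongr
    rw [le_div_iff₀ (sub_pos.mpr hφ)]
    linarith
  calc ‖(v : R)‖ * ‖(↑v⁻¹ : R)‖ ≤ (1 + φ) * ‖(u : R)‖ * (‖(↑u⁻¹ : R)‖ / (1 - φ)) := by gcongr
    _ = (1 + φ) / (1 - φ) * (‖(u : R)‖ * ‖(↑u⁻¹ : R)‖) := by ring

variable {𝕜 n : Type*} [RCLike 𝕜] [Fintype n] [DecidableEq n] {A B : Matrix n n 𝕜} {r : 𝕜}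

lemma norm_mul_norm_inv_eq_one_of_conjTranspose_mul_self [Nonempty n] (hr : r ≠ 0)
    (hA : Aᴴ * A = r • 1) : ‖A‖ * ‖A⁻¹‖ = 1 := by
  have hinv : A⁻¹ = r⁻¹ • Aᴴ :=
    Matrix.inv_eq_left_inv (by rw [Matrix.smul_mul, hA, inv_smul_smul₀ hr])
  calc ‖A‖ * ‖A⁻¹‖ = ‖r‖⁻¹ * (‖A‖ * ‖A‖) := by
        rw [hinv, norm_smul, norm_inv, Matrix.l2_opNorm_conjTranspose]; ring
    _ = ‖r‖⁻¹ * ‖r‖ := by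
        rw [← Matrix.l2_opNorm_conjTranspose_mul_self, hA, norm_smul, CStarRing.norm_one, mul_one]
    _ = 1 := inv_mul_cancel₀ (norm_ne_zero_iff.mpr hr)

theorem isUnit_and_norm_mul_norm_inv_le_of_near_isometry [Nonempty n] {φ : ℝ} (hφ : φ < 1)
    (hr : r ≠ 0) (hA : Aᴴ * A = r • 1) (hAB : ‖B - A‖ ≤ φ * ‖A‖) :
    IsUnit B ∧ ‖B‖ * ‖B⁻¹‖ ≤ (1 + φ) / (1 - φ) := by
  have hcond := norm_mul_norm_inv_eq_one_of_conjTranspose_mul_self hr hA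
  obtain ⟨u, rfl⟩ : IsUnit A := IsUnit.of_mul_eq_one_right (r⁻¹ • Aᴴ)
    (by rw [Matrix.smul_mul, hA, inv_smul_smul₀ hr])
  rw [← Matrix.coe_units_inv] at hcond
  have hrel : ‖B - u‖ * ‖(↑u⁻¹ : Matrix n n 𝕜)‖ ≤ φ := by
    calc ‖B - u‖ * ‖(↑u⁻¹ : Matrix n n 𝕜)‖
        ≤ φ * ‖(u : Matrix n n 𝕜)‖ * ‖(↑u⁻¹ : Matrix n n 𝕜)‖ := by gcongr
      _ = φ := by rw [mul_assoc, hcond, mul_one]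
  obtain ⟨v, rfl⟩ : IsUnit B := by
    refine (u.ofNearby B ?_).isUnit
    rw [← one_div, lt_div_iff₀ (Units.norm_pos u⁻¹)]
    exact hrel.trans_lt hφ
  refine ⟨v.isUnit, ?_⟩
  have hκ := norm_mul_norm_inv_le_of_norm_sub_mul_norm_inv_le hφ hrel
  rwa [hcond, mul_one, Matrix.coe_units_inv] at hκ

end ConditionNumber

section SchurMultiplier

variable {𝕜 m n ι : Type*} [RCLike 𝕜] [Fintype m] [Fintype n] [DecidableEq n]

lemma norm_diagonal_mul_mul_diagonal_le [DecidableEq m] (A : Matrix m n 𝕜) (a : m → 𝕜)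
    (b : n → 𝕜) :
    ‖Matrix.diagonal a * A * Matrix.diagonal b‖ ≤ ‖a‖ * ‖A‖ * ‖b‖ := by
  rw [← Matrix.l2_opNorm_diagonal a, ← Matrix.l2_opNorm_diagonal b]
  exact (Matrix.l2_opNorm_mul _ _).trans (by gcongr; exact Matrix.l2_opNorm_mul _ _)

theorem norm_hadamard_le_of_hasSum (A : Matrix m n 𝕜) {M : Matrix m n 𝕜} {a : ι → m → 𝕜}
    {b : ι → n → 𝕜} {C : ι → ℝ} {c : ℝ} (ha : ∀ i, ‖a i‖ ≤ C i) (hb : ∀ i, ‖b i‖ ≤ 1)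
    (hC : HasSum C c) (hM : ∀ j k, HasSum (fun i => a i j * b i k) (M j k)) :
    ‖A ⊙ M‖ ≤ c * ‖A‖ := by
  classical
  have hsum : HasSum (fun i => Matrix.diagonal (a i) * A * Matrix.diagonal (b i)) (A ⊙ M) := by
    refine Pi.hasSum.mpr fun j => Pi.hasSum.mpr fun k => ?_
    simpa [mul_left_comm, mul_comm, mul_assoc] using (hM j k).mul_left (A j k)
  refine hsum.norm_le_of_bounded (hC.mul_right ‖A‖) fun i => ?_
  calc ‖Matrix.diagonal (a i) * A * Matrix.diagonal (b i)‖ ≤ ‖a i‖ * ‖A‖ * ‖b i‖ :=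
        norm_diagonal_mul_mul_diagonal_le _ _ _
    _ ≤ C i * ‖A‖ * 1 := by
        have := (norm_nonneg _).trans (ha i)
        gcongr
        exacts [ha i, hb i]
    _ = C i * ‖A‖ := mul_one _

end SchurMultiplier

section Trigonometry

lemma antitoneOn_sinc : AntitoneOn sinc (Set.Icc 0 π) := by
  rintro x ⟨hx, -⟩ y ⟨-, hy⟩ hxy
  rcases hx.eq_or_lt with rfl | hx0
  · simpa using sinc_le_one y
  have hy0 : 0 < y := hx0.trans_le hxy
  have hslope := strictConcaveOn_sin_Icc.concaveOn.2 ⟨le_rfl, pi_pos.le⟩ ⟨hy0.le, hy⟩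
    (sub_nonneg.mpr ((div_le_one hy0).mpr hxy)) (by positivity : 0 ≤ x / y) (by ring)
  simp only [smul_eq_mul, mul_zero, sin_zero, zero_add, div_mul_cancel₀ _ hy0.ne'] at hslope
  rw [sinc_of_ne_zero hx0.ne', sinc_of_ne_zero hy0.ne', le_div_iff₀ hx0]
  calc sin y / y * x = x / y * sin y := by ring
    _ ≤ sin x := hslope

lemma sin_lt_cos_of_lt_pi_div_four {x : ℝ} (hx0 : 0 ≤ x) (hx : x < π / 4) : sin x < cos x := by
  rw [← sin_pi_div_two_sub]
  exact sin_lt_sin_of_lt_of_le_pi_div_two (by linarith [pi_pos]) (by linarith) (by linarith)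

lemma monotoneOn_mul_cos : MonotoneOn (fun x => x * cos x) (Set.Icc 0 (π / 4)) := by
  refine monotoneOn_of_deriv_nonneg (convex_Icc _ _) (by fun_prop) (by fun_prop) fun x hx => ?_
  rw [interior_Icc] at hx
  have hsin0 : 0 ≤ sin x := sin_nonneg_of_nonneg_of_le_pi hx.1.le (by linarith [hx.2, pi_pos])
  have hderiv : deriv (fun x => x * cos x) x = cos x - x * sin x := by
    simp [sub_eq_add_neg]
  rw [hderiv, sub_nonneg]
  exact (mul_le_of_le_one_left hsin0 (by linarith [hx.2, pi_le_four])).trans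
    (sin_lt_cos_of_lt_pi_div_four hx.1.le hx.2).le

variable {α δ : ℝ}

lemma abs_mul_sin_pi_mul_le (hδ : |δ| ≤ α) (hα : α ≤ 1 / 2) :
    |δ * sin (π * δ)| ≤ α * sin (π * α) := by
  have habs : |π * δ| = π * |δ| := by rw [abs_mul, abs_of_pos pi_pos]
  have hle : π * |δ| ≤ π * α := by gcongr
  have hα' : π * α ≤ π / 2 := by nlinarith [pi_pos]
  have hsin : |sin (π * δ)| ≤ sin (π * α) := by
    rw [abs_sin_eq_sin_abs_of_abs_le_pi (by linarith [pi_pos]), habs]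
    have : 0 ≤ π * |δ| := by positivity
    exact sin_le_sin_of_le_of_le_pi_div_two (by linarith [pi_pos]) hα' hle
  rw [abs_mul]
  have := (abs_nonneg δ).trans hδ
  gcongr

lemma abs_mul_cos_pi_mul_le (hδ : |δ| ≤ α) (hα : α ≤ 1 / 4) :
    |δ * cos (π * δ)| ≤ α * cos (π * α) := by
  have hle : π * |δ| ≤ π * α := by gcongr
  have hα' : π * α ≤ π / 4 := by nlinarith [pi_pos]
  have hδ0 : 0 ≤ π * |δ| := by positivity
  have hmono := monotoneOn_mul_cos ⟨hδ0, hle.trans hα'⟩ ⟨hδ0.trans hle, hα'⟩ hle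
  have hcos : 0 ≤ cos (π * |δ|) :=
    cos_nonneg_of_neg_pi_div_two_le_of_le (by linarith [pi_pos]) (by linarith [pi_pos])
  have hcos_abs : |cos (π * δ)| = cos (π * |δ|) := by
    rw [← cos_abs (π * δ), abs_mul, abs_of_pos pi_pos, abs_of_nonneg hcos]
  rw [abs_mul, hcos_abs]
  exact le_of_mul_le_mul_left (by simpa only [mul_assoc] using hmono) pi_pos

end Trigonometry

section Fourier

lemma fourierCoeff_liftIco_neg_pi [Fact (0 < 2 * π)] (f : ℝ → ℂ) (n : ℤ) :
    fourierCoeff (AddCircle.liftIco (2 * π) (-π) f) n =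
      (2 * π)⁻¹ * ∫ t in -π..π, f t * Complex.exp (-(n * t * Complex.I)) := by
  rw [fourierCoeff_liftIco_eq, fourierCoeffOn_eq_integral, Complex.real_smul,
    show -π + 2 * π = π by ring]
  congr 1
  · push_cast
    field_simp
    ring
  · refine intervalIntegral.integral_congr fun t _ => ?_
    simp only [fourier_coe_apply, smul_eq_mul]
    rw [mul_comm]
    congr 2
    push_cast
    field_simp
    ring

theorem hasSum_fourier_of_mem_Icc {f : ℝ → ℂ} {c : ℤ → ℂ} (hf : Continuous f)
    (hper : f (-π) = f π)
    (hc : ∀ n : ℤ, ∫ t in -π..π, f t * Complex.exp (-(n * t * Complex.I)) = 2 * π * c n)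
    (hsum : Summable c) {t : ℝ} (ht : t ∈ Set.Icc (-π) π) :
    HasSum (fun n => c n * Complex.exp (n * t * Complex.I)) (f t) := by
  have : Fact (0 < 2 * π) := ⟨two_pi_pos⟩
  have hend : -π + 2 * π = π := by ring
  have hper' : f (-π) = f (-π + 2 * π) := by rw [hend, hper]
  let F : C(AddCircle (2 * π), ℂ) :=
    ⟨AddCircle.liftIco (2 * π) (-π) f, AddCircle.liftIco_continuous hper' hf.continuousOn⟩
  have hF : F (t : AddCircle (2 * π)) = f t := by
    rcases ht.2.eq_or_lt with rfl | hlt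
    · rw [ContinuousMap.coe_mk, ← AddCircle.liftIoc_eq_liftIco hper', AddCircle.liftIoc_coe_apply]
      exact ⟨by linarith [pi_pos], hend.ge⟩
    · exact AddCircle.liftIco_coe_apply ⟨ht.1, by rwa [hend]⟩
  have hcoeff : fourierCoeff F = c := by
    ext n
    rw [ContinuousMap.coe_mk, fourierCoeff_liftIco_neg_pi, hc]
    push_cast
    field_simp
  have hseries := has_pointwise_sum_fourier_series_of_summable (f := F) (by rwa [hcoeff])
    (t : AddCircle (2 * π))
  rw [hcoeff, hF] at hseries
  convert! hseries using 1
  ext n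
  rw [fourier_coe_apply, smul_eq_mul]
  congr 2
  push_cast
  field_simp

theorem hasSum_fourier_shift_of_mem_Icc {f : ℝ → ℂ} {θ : ℝ} {c : ℤ → ℂ} (hf : Continuous f)
    (hper : f (-π) * Complex.exp (θ * π * Complex.I) = f π * Complex.exp (-(θ * π * Complex.I)))
    (hc : ∀ n : ℤ, ∫ t in -π..π, f t * Complex.exp (-((n + θ) * t * Complex.I)) = 2 * π * c n)
    (hsum : Summable c) {t : ℝ} (ht : t ∈ Set.Icc (-π) π) :
    HasSum (fun n => c n * Complex.exp ((n + θ) * t * Complex.I)) (f t) := by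
  have hseries := (hasSum_fourier_of_mem_Icc (c := c)
    (f := fun t => f t * Complex.exp (-(θ * t * Complex.I))) (by fun_prop) (by simpa using hper)
    (fun n => ?_) hsum ht).mul_right (Complex.exp (θ * t * Complex.I))
  · convert! hseries using 1
    · ext n
      rw [mul_assoc (c n), ← Complex.exp_add]
      ring_nf
    · rw [mul_assoc, ← Complex.exp_add, neg_add_cancel, Complex.exp_zero, mul_one]
  · rw [← hc n]
    refine intervalIntegral.integral_congr fun t _ => ?_
    simp only [mul_assoc, ← Complex.exp_add]
    ring_nf

lemma integral_exp_mul_mul_I_eq_sinc (b r : ℝ) :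
    ∫ t in -r..r, Complex.exp (b * t * Complex.I) = 2 * r * sinc (r * b) := by
  rcases eq_or_ne b 0 with rfl | hb
  · simp [two_mul]
  have hscale := intervalIntegral.integral_comp_mul_left (a := -r) (b := r)
    (fun x : ℝ => Complex.exp (x * Complex.I)) hb
  have hb' : (b : ℂ) ≠ 0 := by exact_mod_cast hb
  push_cast at hscale
  rw [hscale, mul_neg, integral_exp_mul_I_eq_sinc, Complex.real_smul, mul_comm b r]
  push_cast
  field_simp

lemma hasSum_fourier_shift_exp_add_exp {δ θ ε : ℝ}
    (hper : (Complex.exp (-(δ * π * Complex.I)) + ε * Complex.exp (δ * π * Complex.I)) *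
        Complex.exp (θ * π * Complex.I) =
      (Complex.exp (δ * π * Complex.I) + ε * Complex.exp (-(δ * π * Complex.I))) *
        Complex.exp (-(θ * π * Complex.I)))
    (hsum : Summable fun n : ℤ => sinc (π * (δ - (n + θ))) + ε * sinc (π * (δ + (n + θ))))
    {t : ℝ} (ht : t ∈ Set.Icc (-π) π) :
    HasSum (fun n : ℤ => ((sinc (π * (δ - (n + θ))) + ε * sinc (π * (δ + (n + θ))) : ℝ) : ℂ) *
        Complex.exp ((n + θ) * t * Complex.I))
      (Complex.exp (δ * t * Complex.I) + ε * Complex.exp (-(δ * t * Complex.I))) := by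
  refine hasSum_fourier_shift_of_mem_Icc
    (f := fun t => Complex.exp (δ * t * Complex.I) + ε * Complex.exp (-(δ * t * Complex.I)))
    (by fun_prop) (by simpa using hper) (fun n => ?_)
    (Complex.hasSum_ofReal.mpr hsum.hasSum).summable ht
  have hint (b : ℝ) : IntervalIntegrable (fun t : ℝ => Complex.exp (b * t * Complex.I))
      MeasureTheory.volume (-π) π := Continuous.intervalIntegrable (by fun_prop) _ _
  calc ∫ t in -π..π, (Complex.exp (δ * t * Complex.I) + ε * Complex.exp (-(δ * t * Complex.I))) *
          Complex.exp (-((n + θ) * t * Complex.I))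
      = ∫ t in -π..π, (Complex.exp ((δ - (n + θ) : ℝ) * t * Complex.I) +
          ε * Complex.exp ((-(δ + (n + θ)) : ℝ) * t * Complex.I)) := by
        refine intervalIntegral.integral_congr fun t _ => ?_
        simp only [add_mul, mul_assoc, ← Complex.exp_add]
        push_cast
        ring_nf
    _ = 2 * π * ((sinc (π * (δ - (n + θ))) + ε * sinc (π * (δ + (n + θ))) : ℝ) : ℂ) := by
        rw [intervalIntegral.integral_add (hint _) ((hint _).const_mul _),
          intervalIntegral.integral_const_mul, integral_exp_mul_mul_I_eq_sinc,
          integral_exp_mul_mul_I_eq_sinc, mul_neg, sinc_neg]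
        push_cast
        ring

end Fourier

section Kadec

lemma summable_one_div_int_add_sq_sub_sq (θ δ : ℝ) :
    Summable fun n : ℤ => 1 / (((n : ℝ) + θ) ^ 2 - δ ^ 2) := by
  have hsq (a : ℝ) : Summable fun n : ℤ => (1 / ((n : ℝ) + a)) ^ 2 := by
    simpa using (Real.summable_one_div_int_add_rpow a 2).mpr one_lt_two
  refine Summable.of_norm_bounded ((hsq (θ - δ)).add (hsq (θ + δ))) fun n => ?_
  have hfac : 1 / (((n : ℝ) + θ) ^ 2 - δ ^ 2) = 1 / (n + (θ - δ)) * (1 / (n + (θ + δ))) := by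
    rw [div_mul_div_comm, one_mul]; ring_nf
  rw [hfac, norm_eq_abs, abs_le]
  constructor <;>
    nlinarith [sq_nonneg (1 / (n + (θ - δ)) - 1 / (n + (θ + δ))),
      sq_nonneg (1 / (n + (θ - δ)) + 1 / (n + (θ + δ)))]

lemma sinc_add_mul_sinc {δ ν ε : ℝ} (hne : δ ^ 2 ≠ ν ^ 2) (hε : ε ^ 2 = 1)
    (hsin : sin (π * (δ + ν)) = ε * sin (π * (δ - ν))) :
    sinc (π * (δ - ν)) + ε * sinc (π * (δ + ν)) =
      2 * (δ * sin (π * (δ - ν)) / (π * (δ ^ 2 - ν ^ 2))) := by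
  have hsub : δ - ν ≠ 0 := fun h => hne (by linear_combination (δ + ν) * h)
  have hadd : δ + ν ≠ 0 := fun h => hne (by linear_combination (δ - ν) * h)
  rw [sinc_of_ne_zero (mul_ne_zero pi_ne_zero hsub), sinc_of_ne_zero (mul_ne_zero pi_ne_zero hadd),
    hsin, sq_sub_sq]
  field_simp
  linear_combination sin (π * (δ - ν)) * (δ - ν) * hε

/-- The Fourier coefficients of `t ↦ cos (δ t) - 1` on `[-π, π]`, normalised to be nonnegative for
`0 ≤ δ ≤ 1/2`: the coefficient of `exp (i n t)` is `-(-1) ^ n * cosCoeff δ n`. For integers `δ ≠ 0`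
the terms `n = ±δ` are division-by-zero values. -/
noncomputable def cosCoeff (δ : ℝ) (n : ℤ) : ℝ :=
  if n = 0 then 1 - sinc (π * δ) else δ * sin (π * δ) / (π * ((n : ℝ) ^ 2 - δ ^ 2))

/-- The coefficients of `t ↦ i sin (δ t)` on `[-π, π]` in the orthogonal system
`exp (i (n - 1/2) t)` of antiperiodic exponentials, normalised to be nonnegative for
`0 ≤ δ ≤ 1/4`: the coefficient of `exp (i (n - 1/2) t)` is `-(-1) ^ n * sinCoeff δ n`. For
half-integers `δ` the terms `n = 1/2 ± δ` are division-by-zero values. -/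
noncomputable def sinCoeff (δ : ℝ) (n : ℤ) : ℝ :=
  δ * cos (π * δ) / (π * (((n : ℝ) - 1 / 2) ^ 2 - δ ^ 2))

lemma one_le_abs_intCast {n : ℤ} (hn : n ≠ 0) : 1 ≤ |(n : ℝ)| := by
  exact_mod_cast Int.one_le_abs hn

lemma half_le_abs_intCast_sub_half (n : ℤ) : 1 / 2 ≤ |(n : ℝ) - 1 / 2| := by
  rw [le_abs]
  rcases le_or_gt n 0 with hn | hn
  · right
    have : (n : ℝ) ≤ 0 := by exact_mod_cast hn
    linarith
  · left
    have : (1 : ℝ) ≤ n := by exact_mod_cast hn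
    linarith

lemma summable_cosCoeff (δ : ℝ) : Summable (cosCoeff δ) := by
  have hsum := (summable_one_div_int_add_sq_sub_sq 0 δ).mul_left (δ * sin (π * δ) / π)
  refine hsum.congr_cofinite ?_
  filter_upwards [(Set.finite_singleton (0 : ℤ)).compl_mem_cofinite] with n hn
  rw [cosCoeff, if_neg (show n ≠ 0 from hn), add_zero, div_mul_div_comm, mul_one]

lemma summable_sinCoeff (δ : ℝ) : Summable (sinCoeff δ) := by
  refine ((summable_one_div_int_add_sq_sub_sq (-1 / 2) δ).mul_left
    (δ * cos (π * δ) / π)).congr fun n => ?_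
  rw [sinCoeff, div_mul_div_comm, mul_one, neg_div, ← sub_eq_add_neg]

lemma sinc_sub_add_sinc_add_int {δ : ℝ} (hδ : |δ| < 1) (n : ℤ) :
    sinc (π * (δ - n)) + sinc (π * (δ + n)) =
      2 * ((if n = 0 then 1 else 0) - (-1) ^ n * cosCoeff δ n) := by
  rcases eq_or_ne n 0 with rfl | hn
  · simp [cosCoeff, two_mul]
  have hne : δ ^ 2 ≠ (n : ℝ) ^ 2 :=
    (sq_lt_sq.mpr (hδ.trans_le (one_le_abs_intCast hn))).ne
  have hsub : sin (π * (δ - n)) = (-1) ^ n * sin (π * δ) := by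
    rw [mul_sub, mul_comm π (n : ℝ), sin_sub_int_mul_pi]
  have hadd : sin (π * (δ + n)) = (-1) ^ n * sin (π * δ) := by
    rw [mul_add, mul_comm π (n : ℝ), sin_add_int_mul_pi]
  have hsum := sinc_add_mul_sinc hne (one_pow 2) (by rw [hadd, hsub, one_mul])
  rw [one_mul] at hsum
  rw [hsum, hsub, cosCoeff, if_neg hn, if_neg hn, ← neg_sub ((n : ℝ) ^ 2), mul_neg, div_neg]
  ring

lemma sinc_sub_sub_sinc_add_half_int {δ : ℝ} (hδ : |δ| < 1 / 2) (n : ℤ) :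
    sinc (π * (δ - (n - 1 / 2))) - sinc (π * (δ + (n - 1 / 2))) =
      2 * (-(-1) ^ n * sinCoeff δ n) := by
  have hne : δ ^ 2 ≠ ((n : ℝ) - 1 / 2) ^ 2 :=
    (sq_lt_sq.mpr (hδ.trans_le (half_le_abs_intCast_sub_half n))).ne
  have hsub : sin (π * (δ - (n - 1 / 2))) = (-1) ^ n * cos (π * δ) := by
    rw [show π * (δ - (n - 1 / 2)) = π * δ + π / 2 - n * π by ring, sin_sub_int_mul_pi,
      sin_add_pi_div_two]
  have hadd : sin (π * (δ + (n - 1 / 2))) = -((-1) ^ n * cos (π * δ)) := by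
    rw [show π * (δ + (n - 1 / 2)) = π * δ - π / 2 + n * π by ring, sin_add_int_mul_pi,
      sin_sub_pi_div_two, mul_neg]
  have hsum := sinc_add_mul_sinc (ε := -1) hne (by norm_num) (by rw [hadd, hsub, neg_one_mul])
  rw [neg_one_mul, ← sub_eq_add_neg] at hsum
  rw [hsum, hsub, sinCoeff, ← neg_sub (((n : ℝ) - 1 / 2) ^ 2), mul_neg, div_neg]
  ring

lemma exp_intCast_mul_pi_mul_I (n : ℤ) : Complex.exp (n * π * Complex.I) = (-1) ^ n := by
  rw [mul_assoc, Complex.exp_int_mul, Complex.exp_pi_mul_I]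

theorem hasSum_cos_sub_one {δ t : ℝ} (hδ : |δ| < 1) (ht : t ∈ Set.Icc (-π) π) :
    HasSum (fun n : ℤ => -((-1) ^ n * cosCoeff δ n) * Complex.exp (n * t * Complex.I))
      (Complex.cos (δ * t) - 1) := by
  have hone : HasSum (fun n : ℤ => if n = 0 then (1 : ℂ) else 0) 1 := hasSum_ite_eq 0 1
  have hsum : Summable fun n : ℤ => sinc (π * (δ - n)) + sinc (π * (δ + n)) := by
    simp_rw [sinc_sub_add_sinc_add_int hδ]
    refine ((hasSum_ite_eq (0 : ℤ) (1 : ℝ)).summable.sub ?_).mul_left 2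
    exact Summable.of_norm (by simpa using (summable_cosCoeff δ).norm)
  have hexp := hasSum_fourier_shift_exp_add_exp (δ := δ) (θ := 0) (ε := 1)
    (by simp [add_comm]) (by simpa using hsum) ht
  simp only [add_zero, one_mul, Complex.ofReal_one, Complex.ofReal_zero,
    sinc_sub_add_sinc_add_int hδ] at hexp
  convert! (hexp.div_const 2).sub hone using 1
  · ext n
    rcases eq_or_ne n 0 with rfl | hn
    · simp
    · push_cast [if_neg hn]
      ring
  · rw [Complex.cos, neg_mul]

theorem hasSum_I_mul_sin {δ t : ℝ} (hδ : |δ| < 1 / 2) (ht : t ∈ Set.Icc (-π) π) :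
    HasSum (fun n : ℤ => -((-1) ^ n * sinCoeff δ n) *
        Complex.exp ((n - 1 / 2) * t * Complex.I))
      (Complex.I * Complex.sin (δ * t)) := by
  have hsum : Summable fun n : ℤ =>
      sinc (π * (δ - (n - 1 / 2))) - sinc (π * (δ + (n - 1 / 2))) := by
    simp_rw [sinc_sub_sub_sinc_add_half_int hδ]
    exact Summable.mul_left 2 (Summable.of_norm (by simpa using (summable_sinCoeff δ).norm))
  have hexp := hasSum_fourier_shift_exp_add_exp (δ := δ) (θ := -1 / 2) (ε := -1) ?_ ?_ ht
  · have hshift (n : ℤ) : (n : ℝ) + -1 / 2 = n - 1 / 2 := by ring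
    simp only [hshift, neg_one_mul, ← sub_eq_add_neg, sinc_sub_sub_sinc_add_half_int hδ] at hexp
    convert! hexp.div_const 2 using 1
    · ext n
      push_cast
      ring_nf
    · rw [Complex.sin]
      push_cast
      rw [neg_mul]
      linear_combination ((Complex.exp (-(δ * t * Complex.I)) -
        Complex.exp (δ * t * Complex.I)) / 2) * Complex.I_sq
  · push_cast
    rw [show (-1 / 2 : ℂ) * π * Complex.I = -π / 2 * Complex.I by ring,
      show -(-π / 2 * Complex.I) = π / 2 * Complex.I by ring,
      Complex.exp_neg_pi_div_two_mul_I, Complex.exp_pi_div_two_mul_I]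
    ring
  · refine hsum.congr fun n => ?_
    ring_nf

lemma hasSum_cosCoeff {δ : ℝ} (hδ : |δ| < 1) : HasSum (cosCoeff δ) (1 - cos (π * δ)) := by
  -- At `t = π` the exponentials cancel the alternating signs of the coefficients.
  have hπ := hasSum_cos_sub_one hδ (t := π) ⟨by linarith [pi_pos], le_rfl⟩
  rw [← Complex.hasSum_ofReal]
  convert! hπ.neg using 1
  · ext n
    rw [exp_intCast_mul_pi_mul_I, neg_mul, neg_neg, mul_right_comm, ← mul_zpow]
    simp
  · push_cast
    rw [neg_sub, mul_comm]

lemma hasSum_sinCoeff {δ : ℝ} (hδ : |δ| < 1 / 2) : HasSum (sinCoeff δ) (sin (π * δ)) := by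
  have hπ := hasSum_I_mul_sin hδ (t := π) ⟨by linarith [pi_pos], le_rfl⟩
  rw [← Complex.hasSum_ofReal]
  convert! hπ.mul_left (-Complex.I) using 1
  · ext n
    have hexp : Complex.exp ((n - 1 / 2) * π * Complex.I) = -((-1) ^ n * Complex.I) := by
      rw [show ((n : ℂ) - 1 / 2) * π * Complex.I = n * π * Complex.I + -π / 2 * Complex.I by ring,
        Complex.exp_add, exp_intCast_mul_pi_mul_I, Complex.exp_neg_pi_div_two_mul_I, mul_neg]
    have hsq : (-1 : ℂ) ^ n * (-1) ^ n = 1 := by simp [← mul_zpow]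
    rw [hexp]
    linear_combination (-(sinCoeff δ n : ℂ)) * hsq +
      (sinCoeff δ n : ℂ) * (-1) ^ n * (-1) ^ n * Complex.I_sq
  · push_cast
    rw [mul_comm (π : ℂ)]
    linear_combination Complex.sin (δ * π) * Complex.I_sq

variable {α δ : ℝ}

lemma abs_div_pi_mul_sq_sub_sq_le {p q ν : ℝ} (hp : |p| ≤ q) (hδ : |δ| ≤ α) (hα : α < |ν|) :
    |p / (π * (ν ^ 2 - δ ^ 2))| ≤ q / (π * (ν ^ 2 - α ^ 2)) := by
  have hδα : δ ^ 2 ≤ α ^ 2 := sq_le_sq.mpr (hδ.trans (le_abs_self α))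
  have hαν : 0 < ν ^ 2 - α ^ 2 := by
    rw [sub_pos, sq_lt_sq, abs_of_nonneg ((abs_nonneg δ).trans hδ)]
    exact hα
  rw [abs_div, abs_of_pos (mul_pos pi_pos (by linarith : 0 < ν ^ 2 - δ ^ 2))]
  gcongr
  exact (abs_nonneg p).trans hp

lemma abs_cosCoeff_le (hδ : |δ| ≤ α) (hα : α ≤ 1 / 2) (n : ℤ) :
    |cosCoeff δ n| ≤ cosCoeff α n := by
  rcases eq_or_ne n 0 with rfl | hn
  · have hsinc : sinc (π * α) ≤ sinc (π * δ) := by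
      have hle : |π * δ| ≤ π * α := by rw [abs_mul, abs_of_pos pi_pos]; gcongr
      have hα' : π * α ≤ π := by nlinarith [pi_pos]
      have habs : sinc |π * δ| = sinc (π * δ) := by
        rcases abs_choice (π * δ) with h | h <;> simp only [h, sinc_neg]
      rw [← habs]
      exact antitoneOn_sinc ⟨abs_nonneg _, hle.trans hα'⟩ ⟨(abs_nonneg _).trans hle, hα'⟩ hle
    rw [cosCoeff, cosCoeff, if_pos rfl, if_pos rfl,
      abs_of_nonneg (sub_nonneg.mpr (sinc_le_one _))]
    linarith
  · rw [cosCoeff, cosCoeff, if_neg hn, if_neg hn]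
    exact abs_div_pi_mul_sq_sub_sq_le (abs_mul_sin_pi_mul_le hδ hα) hδ
      (by linarith [one_le_abs_intCast hn])

lemma abs_sinCoeff_le (hδ : |δ| ≤ α) (hα : α ≤ 1 / 4) (n : ℤ) :
    |sinCoeff δ n| ≤ sinCoeff α n :=
  abs_div_pi_mul_sq_sub_sq_le (abs_mul_cos_pi_mul_le hδ hα) hδ
    (by linarith [half_le_abs_intCast_sub_half n])

variable {m n : Type*} [Fintype m] [Fintype n] [DecidableEq n] (A : Matrix m n ℂ)
  {x : m → ℝ} {t : n → ℝ}

lemma norm_hadamard_cos_sub_one_le (hα0 : 0 ≤ α) (hα : α ≤ 1 / 2) (hx : ∀ j, |x j| ≤ α)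
    (ht : ∀ k, t k ∈ Set.Icc (-π) π) :
    ‖A ⊙ Matrix.of fun j k => Complex.cos (x j * t k) - 1‖ ≤ (1 - cos (π * α)) * ‖A‖ := by
  have hcoeff (i : ℤ) : 0 ≤ cosCoeff α i :=
    (abs_nonneg _).trans (abs_cosCoeff_le (abs_of_nonneg hα0).le hα i)
  refine norm_hadamard_le_of_hasSum A (a := fun i j => -((-1) ^ i * cosCoeff (x j) i))
    (b := fun i k => Complex.exp (i * t k * Complex.I))
    (fun i => (pi_norm_le_iff_of_nonneg (hcoeff i)).mpr fun j => ?_)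
    (fun i => (pi_norm_le_iff_of_nonneg zero_le_one).mpr fun k => ?_)
    (hasSum_cosCoeff (by rw [abs_of_nonneg hα0]; linarith))
    fun j k => hasSum_cos_sub_one (by linarith [hx j]) (ht k)
  · simpa using abs_cosCoeff_le (hx j) hα i
  · simpa using (Complex.norm_exp_ofReal_mul_I (i * t k)).le

lemma norm_hadamard_I_mul_sin_le (hα0 : 0 ≤ α) (hα : α ≤ 1 / 4) (hx : ∀ j, |x j| ≤ α)
    (ht : ∀ k, t k ∈ Set.Icc (-π) π) :
    ‖A ⊙ Matrix.of fun j k => Complex.I * Complex.sin (x j * t k)‖ ≤ sin (π * α) * ‖A‖ := by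
  have hcoeff (i : ℤ) : 0 ≤ sinCoeff α i :=
    (abs_nonneg _).trans (abs_sinCoeff_le (abs_of_nonneg hα0).le hα i)
  refine norm_hadamard_le_of_hasSum A (a := fun i j => -((-1) ^ i * sinCoeff (x j) i))
    (b := fun i k => Complex.exp ((i - 1 / 2) * t k * Complex.I))
    (fun i => (pi_norm_le_iff_of_nonneg (hcoeff i)).mpr fun j => ?_)
    (fun i => (pi_norm_le_iff_of_nonneg zero_le_one).mpr fun k => ?_)
    (hasSum_sinCoeff (by rw [abs_of_nonneg hα0]; linarith))
    fun j k => hasSum_I_mul_sin (by linarith [hx j]) (ht k)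
  · simpa using abs_sinCoeff_le (hx j) hα i
  · simpa using (Complex.norm_exp_ofReal_mul_I ((i - 1 / 2) * t k)).le

theorem norm_hadamard_exp_sub_le (hα0 : 0 ≤ α) (hα : α ≤ 1 / 4) (hx : ∀ j, |x j| ≤ α)
    (ht : ∀ k, t k ∈ Set.Icc (-π) π) :
    ‖A ⊙ (Matrix.of fun j k => Complex.exp (x j * t k * Complex.I)) - A‖ ≤
      (1 - cos (π * α) + sin (π * α)) * ‖A‖ := by
  have hsplit : A ⊙ (Matrix.of fun j k => Complex.exp (x j * t k * Complex.I)) - A =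
      A ⊙ (Matrix.of fun j k => Complex.cos (x j * t k) - 1) +
        A ⊙ (Matrix.of fun j k => Complex.I * Complex.sin (x j * t k)) := by
    ext j k
    simp only [Matrix.sub_apply, Matrix.add_apply, Matrix.hadamard_apply, Matrix.of_apply,
      Complex.exp_mul_I]
    ring
  rw [hsplit, add_mul]
  exact norm_add_le_of_le (norm_hadamard_cos_sub_one_le A hα0 (by linarith) hx ht)
    (norm_hadamard_I_mul_sin_le A hα0 hα hx ht)

end Kadec

section NUDFT

/-- The nonuniform discrete Fourier transform with nodes `x` and frequencies `ω`, acting on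
coefficient vectors: row `j` evaluates `∑ k, c k * exp (-i x ω k)` at the node `x j`. -/
noncomputable def nudft {m n : Type*} (x : m → ℝ) (ω : n → ℝ) : Matrix m n ℂ :=
  Matrix.of fun j k => Complex.exp (-Complex.I * x j * ω k)

theorem norm_nudft_sub_nudft_le {m n : Type*} [Fintype m] [Fintype n] [DecidableEq n]
    {x y : m → ℝ} {ω : n → ℝ} {α h : ℝ} (hα0 : 0 ≤ α) (hα : α ≤ 1 / 4) (hh : 0 < h)
    (hxy : ∀ j, |x j - y j| ≤ α * h) (hω : ∀ k, h * |ω k| ≤ π) :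
    ‖nudft x ω - nudft y ω‖ ≤ (1 - cos (π * α) + sin (π * α)) * ‖nudft y ω‖ := by
  have hδ (j : m) : |(y j - x j) / h| ≤ α := by
    rw [abs_div, abs_of_pos hh, div_le_iff₀ hh, abs_sub_comm]
    exact hxy j
  have ht (k : n) : h * ω k ∈ Set.Icc (-π) π := by
    rw [Set.mem_Icc, ← abs_le, abs_mul, abs_of_pos hh]
    exact hω k
  convert! norm_hadamard_exp_sub_le (nudft y ω) hα0 hα hδ ht using 3
  ext j k
  have hh' : (h : ℂ) ≠ 0 := by exact_mod_cast hh.ne'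
  simp only [nudft, Matrix.of_apply, Matrix.hadamard_apply, ← Complex.exp_add]
  congr 1
  push_cast
  field_simp
  ring

lemma sum_zpow_sub_pow_of_isPrimitiveRoot {K : Type*} [Field K] {ζ : K} {n : ℕ}
    (hζ : IsPrimitiveRoot ζ n) (k l : Fin n) :
    ∑ j : Fin n, (ζ ^ ((k : ℤ) - l)) ^ (j : ℕ) = if k = l then (n : K) else 0 := by
  rw [Fin.sum_univ_eq_sum_range (fun j => (ζ ^ ((k : ℤ) - l)) ^ j) n]
  split_ifs with hkl
  · simp [hkl]
  have hne : ζ ^ ((k : ℤ) - l) ≠ 1 := by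
    rw [Ne, hζ.zpow_eq_one_iff_dvd]
    intro hdvd
    have := Int.eq_zero_of_abs_lt_dvd hdvd (abs_lt.mpr (by omega))
    omega
  have hpow : (ζ ^ ((k : ℤ) - l)) ^ n = 1 := by
    rw [← zpow_natCast, zpow_comm, zpow_natCast, hζ.pow_eq_one, one_zpow]
  rw [geom_sum_eq hne, hpow, sub_self, zero_div]

lemma conjTranspose_nudft_mul_nudft_apply {m n : Type*} [Fintype m] (x : m → ℝ) (ω : n → ℝ)
    (k l : n) :
    ((nudft x ω)ᴴ * nudft x ω) k l = ∑ j, Complex.exp (x j * (ω k - ω l) * Complex.I) := by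
  simp only [nudft, Matrix.mul_apply, Matrix.conjTranspose_apply, Matrix.of_apply,
    Complex.star_def, ← Complex.exp_conj, ← Complex.exp_add, map_mul, map_neg, Complex.conj_I,
    Complex.conj_ofReal]
  refine sum_congr rfl fun j _ => ?_
  ring_nf

theorem conjTranspose_nudft_mul_nudft_of_uniform {n : ℕ} [NeZero n] (a b : ℝ) :
    (nudft (fun j : Fin n => (j - a) * (2 * π / n)) (fun k : Fin n => k - b))ᴴ *
      nudft (fun j : Fin n => (j - a) * (2 * π / n)) (fun k : Fin n => k - b) =
      (n : ℂ) • (1 : Matrix (Fin n) (Fin n) ℂ) := by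
  have hζ := Complex.isPrimitiveRoot_exp n (NeZero.ne n)
  set ζ := Complex.exp (2 * π * Complex.I / n)
  ext k l
  have hentry (j : Fin n) :
      Complex.exp (((j - a) * (2 * π / n) : ℝ) * ((k - b : ℝ) - (l - b : ℝ)) * Complex.I) =
        Complex.exp (-a * (2 * π / n) * (k - l) * Complex.I) *
          (ζ ^ ((k : ℤ) - l)) ^ (j : ℕ) := by
    rw [← Complex.exp_int_mul, ← Complex.exp_nat_mul, ← Complex.exp_add]
    congr 1
    push_cast
    ring
  rw [conjTranspose_nudft_mul_nudft_apply]
  simp only [hentry]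
  rw [← mul_sum, sum_zpow_sub_pow_of_isPrimitiveRoot hζ, Matrix.smul_apply, Matrix.one_apply]
  split_ifs with hkl <;> simp [hkl]

theorem nudft_condition_number_bound_general {n : ℕ} [NeZero n] {α a b : ℝ} (hα : α < 1 / 4)
    (hb : b ∈ Set.Icc ((n : ℝ) / 2 - 1) (n / 2)) {x : Fin n → ℝ}
    (hx : ∀ j : Fin n, |x j - (j - a) * (2 * π / n)| ≤ α * (2 * π / n)) :
    IsUnit (nudft x fun k : Fin n => (k : ℝ) - b) ∧
      ‖nudft x fun k : Fin n => (k : ℝ) - b‖ * ‖(nudft x fun k : Fin n => (k : ℝ) - b)⁻¹‖ ≤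
        (1 + (1 - cos (π * α) + sin (π * α))) / (1 - (1 - cos (π * α) + sin (π * α))) := by
  have hn : (0 : ℝ) < n := by exact_mod_cast NeZero.pos n
  have hh : 0 < 2 * π / n := by positivity
  have hα0 : 0 ≤ α := nonneg_of_mul_nonneg_left ((abs_nonneg _).trans (hx 0)) hh
  have hω (k : Fin n) : 2 * π / n * |(k : ℝ) - b| ≤ π := by
    have hk : (k : ℝ) + 1 ≤ n := by exact_mod_cast k.isLt
    have hkb : |(k : ℝ) - b| ≤ n / 2 :=
      abs_le.mpr ⟨by linarith [hb.2, (k : ℕ).cast_nonneg (α := ℝ)], by linarith [hb.1]⟩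
    calc 2 * π / n * |(k : ℝ) - b| ≤ 2 * π / n * (n / 2) := by gcongr
      _ = π := by field_simp
  have hsin : sin (π * α) < cos (π * α) :=
    sin_lt_cos_of_lt_pi_div_four (by positivity) (by nlinarith [pi_pos])
  exact isUnit_and_norm_mul_norm_inv_le_of_near_isometry (by linarith) (NeZero.ne (n : ℂ))
    (conjTranspose_nudft_mul_nudft_of_uniform a b)
    (norm_nudft_sub_nudft_le hα0 hα.le hh hx hω)

end NUDFT

/-- the spectral condition number of the NUDFT matrix at α-perturbed nodes
(α < 1/4) is bounded independently of N. -/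
theorem nudft_condition_number_bound (N : ℕ) (hN : 0 < N) (α : ℝ) (hα0 : 0 ≤ α) (hα : α < 1/4)
    (xt : Fin (2*N+1) → ℝ)
    (hxt : ∀ j, |xt j - (((j : ℕ) : ℝ) - (N : ℝ)) * (2*π/(2*N+1))| ≤ α * (2*π/(2*N+1)))
    (Ftil : Matrix (Fin (2*N+1)) (Fin (2*N+1)) ℂ)
    (hFtil : ∀ j k, Ftil j k =
      Complex.exp (-Complex.I * (xt j : ℂ) * (((k : ℕ) : ℂ) - (N : ℂ)))) :
    IsUnit Ftil ∧
    ‖Matrix.toEuclideanCLM (𝕜 := ℂ) Ftil‖ * ‖Matrix.toEuclideanCLM (𝕜 := ℂ) Ftil⁻¹‖ ≤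
      (1 + (1 - Real.cos (π*α) + Real.sin (π*α))) /
        (1 - (1 - Real.cos (π*α) + Real.sin (π*α))) := by
  have hF : Ftil = nudft xt fun k : Fin (2 * N + 1) => (k : ℝ) - N := by
    ext j k
    simp [hFtil, nudft]
  simp only [Matrix.l2_opNorm_toEuclideanCLM, hF]
  refine nudft_condition_number_bound_general hα (a := N) ⟨?_, ?_⟩ fun j => ?_
  · push_cast; linarith
  · push_cast; linarith
  · exact_mod_cast hxt j
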